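/- arXiv:2402.00991 — 2 statements merged into one kernel-verified Lean document; each statement's English description precedes it below -/
import Mathlib

section
/- Let R be a commutative ring, let f, g ∈ R, let (P, Q, T) be a 3-matrix factorization of f of size n (i.e., P, Q, T are n×n matrices over R with P * Q * T = f • I_n), and let (P', Q', T') be a 3-matrix factorization of g of size m. Then the componentwise Kronecker product (P ⊗ P', Q ⊗ Q', T ⊗ T') is a 3-matrix factorization of f*g of size n*m, i.e., (P ⊗ P') * (Q ⊗ Q') * (T ⊗ T') = (f*g) • I_{nm}. -/
open Matrix Kronecker

theorem smul_kronecker_smul {S α l m n p : Type*} [Monoid S] [Mul α] [MulAction S α]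
    [IsScalarTower S α α] [SMulCommClass S α α] (r s : S) (A : Matrix l m α) (B : Matrix n p α) :
    (r • A) ⊗ₖ (s • B) = (r * s) • A ⊗ₖ B := by
  rw [smul_kronecker, kronecker_smul, smul_smul]

theorem mul_mul_kronecker_mul_mul {R k l m n k' l' m' n' : Type*} [CommSemiring R]
    [Fintype l] [Fintype m] [Fintype l'] [Fintype m']
    (A : Matrix k l R) (B : Matrix l m R) (C : Matrix m n R)
    (A' : Matrix k' l' R) (B' : Matrix l' m' R) (C' : Matrix m' n' R) :
    (A * B * C) ⊗ₖ (A' * B' * C') = A ⊗ₖ A' * B ⊗ₖ B' * C ⊗ₖ C' := by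
  rw [mul_kronecker_mul, mul_kronecker_mul]

theorem kronecker_three_matrix_factorization_general
    {R k l m k' l' m' : Type*} [CommSemiring R] [DecidableEq k] [DecidableEq k']
    [Fintype l] [Fintype m] [Fintype l'] [Fintype m'] (f g : R)
    (P : Matrix k l R) (Q : Matrix l m R) (T : Matrix m k R)
    (P' : Matrix k' l' R) (Q' : Matrix l' m' R) (T' : Matrix m' k' R)
    (hf : P * Q * T = f • (1 : Matrix k k R))
    (hg : P' * Q' * T' = g • (1 : Matrix k' k' R)) :
    (P ⊗ₖ P') * (Q ⊗ₖ Q') * (T ⊗ₖ T') = (f * g) • (1 : Matrix (k × k') (k × k') R) :=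
  calc
    (P ⊗ₖ P') * (Q ⊗ₖ Q') * (T ⊗ₖ T') = (P * Q * T) ⊗ₖ (P' * Q' * T') :=
      (mul_mul_kronecker_mul_mul P Q T P' Q' T').symm
    _ = (f • (1 : Matrix k k R)) ⊗ₖ (g • (1 : Matrix k' k' R)) := by rw [hf, hg]
    _ = (f * g) • ((1 : Matrix k k R) ⊗ₖ (1 : Matrix k' k' R)) := smul_kronecker_smul f g 1 1
    _ = (f * g) • (1 : Matrix (k × k') (k × k') R) := by rw [one_kronecker_one]

/-- The multiplicative tensor product of a 3-matrix factorization of `f` (size `n`)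
with a 3-matrix factorization of `g` (size `m`), taken componentwise via the
Kronecker product, is a 3-matrix factorization of `f * g` (size `n * m`). -/
theorem kronecker_three_matrix_factorization
    {R : Type*} [CommRing R] {n m : ℕ} (f g : R)
    (P Q T : Matrix (Fin n) (Fin n) R) (P' Q' T' : Matrix (Fin m) (Fin m) R)
    (hf : P * Q * T = f • (1 : Matrix (Fin n) (Fin n) R))
    (hg : P' * Q' * T' = g • (1 : Matrix (Fin m) (Fin m) R)) :
    (P ⊗ₖ P') * (Q ⊗ₖ Q') * (T ⊗ₖ T') =
      (f * g) • (1 : Matrix (Fin n × Fin m) (Fin n × Fin m) R) :=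
  kronecker_three_matrix_factorization_general f g P Q T P' Q' T' hf hg
end

section
/- Let R be a commutative ring. Let φ, ψ, θ be n₁×n₁ matrices, φ', ψ', θ' be n₂×n₂ matrices over R, and let σ, ρ, ζ be m₁×m₁ matrices and σ', ρ', ζ' be m₂×m₂ matrices over R. Suppose (α_f, β_f, δ_f) is a triple of n₂×n₁ matrices satisfying α_f * φ = φ' * β_f, ψ' * δ_f = β_f * ψ, and δ_f * θ = θ' * α_f, and (α_g, β_g, δ_g) is a triple of m₂×m₁ matrices satisfying α_g * σ = σ' * β_g, ρ' * δ_g = β_g * ρ, and δ_g * ζ = ζ' * α_g. Then the triple of Kronecker products (α_f ⊗ α_g, β_f ⊗ β_g, δ_f ⊗ δ_g) satisfies: (α_f ⊗ α_g) * (φ ⊗ σ) = (φ' ⊗ σ') * (β_f ⊗ β_g), (ψ' ⊗ ρ') * (δ_f ⊗ δ_g) = (β_f ⊗ β_g) * (ψ ⊗ ρ), and (δ_f ⊗ δ_g) * (θ ⊗ ζ) = (θ' ⊗ ζ') * (α_f ⊗ α_g). -/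
open Matrix Kronecker

theorem kronecker_mul_kronecker_eq_of_mul_eq_mul
    {R l m n p l' m' n' p' : Type*} [CommSemiring R]
    [Fintype m] [Fintype p] [Fintype m'] [Fintype p']
    {A : Matrix l m R} {B : Matrix m n R} {C : Matrix l p R} {D : Matrix p n R}
    {A' : Matrix l' m' R} {B' : Matrix m' n' R} {C' : Matrix l' p' R} {D' : Matrix p' n' R}
    (h : A * B = C * D) (h' : A' * B' = C' * D') :
    (A ⊗ₖ A') * (B ⊗ₖ B') = (C ⊗ₖ C') * (D ⊗ₖ D') :=
  calc
    (A ⊗ₖ A') * (B ⊗ₖ B') = (A * B) ⊗ₖ (A' * B') := (mul_kronecker_mul A B A' B').symm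
    _ = (C * D) ⊗ₖ (C' * D') := by rw [h, h']
    _ = (C ⊗ₖ C') * (D ⊗ₖ D') := mul_kronecker_mul C D C' D'

theorem kronecker_morphism_three_matrix_factorization_general
    {R n₁ n₂ m₁ m₂ : Type*} [CommSemiring R]
    [Fintype n₁] [Fintype n₂] [Fintype m₁] [Fintype m₂]
    {φ ψ θ : Matrix n₁ n₁ R} {φ' ψ' θ' : Matrix n₂ n₂ R}
    {σ ρ ζ : Matrix m₁ m₁ R} {σ' ρ' ζ' : Matrix m₂ m₂ R}
    {αf βf δf : Matrix n₂ n₁ R} {αg βg δg : Matrix m₂ m₁ R}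
    (hf1 : αf * φ = φ' * βf) (hf2 : ψ' * δf = βf * ψ) (hf3 : δf * θ = θ' * αf)
    (hg1 : αg * σ = σ' * βg) (hg2 : ρ' * δg = βg * ρ) (hg3 : δg * ζ = ζ' * αg) :
    (αf ⊗ₖ αg) * (φ ⊗ₖ σ) = (φ' ⊗ₖ σ') * (βf ⊗ₖ βg) ∧
    (ψ' ⊗ₖ ρ') * (δf ⊗ₖ δg) = (βf ⊗ₖ βg) * (ψ ⊗ₖ ρ) ∧
    (δf ⊗ₖ δg) * (θ ⊗ₖ ζ) = (θ' ⊗ₖ ζ') * (αf ⊗ₖ αg) :=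
  ⟨kronecker_mul_kronecker_eq_of_mul_eq_mul hf1 hg1,
    kronecker_mul_kronecker_eq_of_mul_eq_mul hf2 hg2,
    kronecker_mul_kronecker_eq_of_mul_eq_mul hf3 hg3⟩

/-- The multiplicative tensor product of two morphisms of 3-matrix factorizations,
taken componentwise via the Kronecker product, satisfies the three commutation
identities defining a morphism of 3-matrix factorizations. -/
theorem kronecker_morphism_three_matrix_factorization
    {R : Type*} [CommRing R] {n₁ n₂ m₁ m₂ : ℕ}
    (φ ψ θ : Matrix (Fin n₁) (Fin n₁) R)
    (φ' ψ' θ' : Matrix (Fin n₂) (Fin n₂) R)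
    (σ ρ ζ : Matrix (Fin m₁) (Fin m₁) R)
    (σ' ρ' ζ' : Matrix (Fin m₂) (Fin m₂) R)
    (αf βf δf : Matrix (Fin n₂) (Fin n₁) R)
    (αg βg δg : Matrix (Fin m₂) (Fin m₁) R)
    (hf1 : αf * φ = φ' * βf) (hf2 : ψ' * δf = βf * ψ) (hf3 : δf * θ = θ' * αf)
    (hg1 : αg * σ = σ' * βg) (hg2 : ρ' * δg = βg * ρ) (hg3 : δg * ζ = ζ' * αg) :
    (αf ⊗ₖ αg) * (φ ⊗ₖ σ) = (φ' ⊗ₖ σ') * (βf ⊗ₖ βg) ∧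
    (ψ' ⊗ₖ ρ') * (δf ⊗ₖ δg) = (βf ⊗ₖ βg) * (ψ ⊗ₖ ρ) ∧
    (δf ⊗ₖ δg) * (θ ⊗ₖ ζ) = (θ' ⊗ₖ ζ') * (αf ⊗ₖ αg) :=
  kronecker_morphism_three_matrix_factorization_general hf1 hf2 hf3 hg1 hg2 hg3
end
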